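/- arXiv:1609.07031 — 3 statements merged into one kernel-verified Lean document; each statement's English description precedes it below -/
import Mathlib

section
/- Let H be a real Hilbert space with more than one element, let c ∈ [1,∞), n ∈ ℕ₀, x,y ∈ H, and V ∈ 𝒞^{n+1}_c(H,[0,∞)). Then (i) for every t ∈ [0,1] at which the function s ↦ V(x+sy) is differentiable it holds that |(d/dt)V(x+ty)| ≤ c‖y‖_H (1+V(x+ty))^{1−1/c}, and (ii) for every i ∈ {1,…,n}, all z₁,…,z_i ∈ H, and every t ∈ [0,1] at which s ↦ V^{(i)}(x+sy)(z₁,…,z_i) is differentiable it holds that |(d/dt)(V^{(i)}(x+ty)(z₁,…,z_i))| ≤ c‖z₁‖_H⋯‖z_i‖_H ‖y‖_H (1+V(x+ty))^{1−1/c}. -/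
/-!
The difference quotient at `t` of `s ↦ V⁽ⁱ⁾(x + s y)(z₁, …, z_i)` is bounded, by the local Lipschitz
condition, by `c ‖z₁‖ ⋯ ‖z_i‖ ‖y‖ (1 + sup |V|) ^ (1 - 1/c)`, the supremum being over the segment
between `x + s y` and `x + t y`. As `s → t` the segment shrinks to the point `x + t y`, so
continuity of `V` makes the supremum converge to `|V (x + t y)|`.
-/

open Filter Topology

section SegmentSup

variable {E F : Type*} [AddCommGroup E] [Module ℝ E] [SeminormedAddCommGroup F]
  {f : E → F} {u v : E} {a : ℝ}

/-- The supremum of `‖f‖` over the segment joining `u` and `v`, i.e. the quantity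
`sup_{r ∈ [0,1]} |f (r u + (1 - r) v)|` in the Lipschitz condition defining `𝒞^m_c`. It is a
supremum in `ℝ`, hence `0` when `f` is unbounded on the segment. -/
noncomputable def segmentSup (f : E → F) (u v : E) : ℝ :=
  ⨆ r ∈ Set.Icc (0 : ℝ) 1, ‖f (r • u + (1 - r) • v)‖

theorem iSup_norm_mem_segment_le (hf : ∀ w ∈ segment ℝ u v, ‖f w‖ ≤ a) (r : ℝ) :
    ⨆ _ : r ∈ Set.Icc (0 : ℝ) 1, ‖f (r • u + (1 - r) • v)‖ ≤ a :=
  Real.iSup_le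
    (fun hr => hf _ ⟨r, 1 - r, hr.1, sub_nonneg.2 hr.2, add_sub_cancel r 1, rfl⟩)
    ((norm_nonneg _).trans (hf v (right_mem_segment ℝ u v)))

theorem segmentSup_le (hf : ∀ w ∈ segment ℝ u v, ‖f w‖ ≤ a) : segmentSup f u v ≤ a :=
  ciSup_le (iSup_norm_mem_segment_le hf)

theorem norm_right_le_segmentSup (hf : ∀ w ∈ segment ℝ u v, ‖f w‖ ≤ a) :
    ‖f v‖ ≤ segmentSup f u v := by
  have hbdd : BddAbove (Set.range fun r : ℝ =>
      ⨆ _ : r ∈ Set.Icc (0 : ℝ) 1, ‖f (r • u + (1 - r) • v)‖) :=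
    ⟨a, Set.forall_mem_range.2 (iSup_norm_mem_segment_le hf)⟩
  simpa [segmentSup] using le_ciSup hbdd 0

theorem tendsto_segmentSup [TopologicalSpace E] [LocallyConvexSpace ℝ E]
    (hf : ContinuousAt f v) : Tendsto (fun u => segmentSup f u v) (𝓝 v) (𝓝 ‖f v‖) := by
  have eventually_le {a : ℝ} (ha : ‖f v‖ < a) :
      ∀ᶠ u in 𝓝 v, ∀ w ∈ segment ℝ u v, ‖f w‖ ≤ a := by
    have hle : ∀ᶠ w in 𝓝[Set.univ] v, ‖f w‖ ≤ a := by
      simpa only [nhdsWithin_univ] using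
        (hf.norm.eventually_lt_const ha).mono fun _ => le_of_lt
    simpa only [nhdsWithin_univ, segment_symm ℝ v] using
      (convex_univ (𝕜 := ℝ)).eventually_nhdsWithin_segment (Set.mem_univ v) hle
  refine tendsto_order.2 ⟨fun a ha => ?_, fun a ha => ?_⟩
  · filter_upwards [eventually_le (lt_add_one _)] with u hu
    exact ha.trans_le (norm_right_le_segmentSup hu)
  · obtain ⟨b, hvb, hba⟩ := exists_between ha
    filter_upwards [eventually_le hvb] with u hu
    exact (segmentSup_le hu).trans_lt hba

end SegmentSup

theorem norm_le_mul_norm_of_hasDerivAt_add_smul {𝕜 E F : Type*} [NontriviallyNormedField 𝕜]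
    [SeminormedAddCommGroup E] [NormedSpace 𝕜 E] [NormedAddCommGroup F] [NormedSpace 𝕜 F]
    {f : E → F} {f' : F} {K : E → ℝ} {L : ℝ} {x y : E} {t : 𝕜}
    (hf : HasDerivAt (fun s : 𝕜 => f (x + s • y)) f' t)
    (hK : Tendsto K (𝓝 (x + t • y)) (𝓝 L))
    (hbound : ∀ᶠ u in 𝓝 (x + t • y), ‖f u - f (x + t • y)‖ ≤ K u * ‖u - (x + t • y)‖) :
    ‖f'‖ ≤ L * ‖y‖ := by
  have hline : Tendsto (fun s : 𝕜 => x + s • y) (𝓝[≠] t) (𝓝 (x + t • y)) :=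
    (Continuous.tendsto (by fun_prop) t).mono_left nhdsWithin_le_nhds
  refine le_of_tendsto_of_tendsto (hasDerivAt_iff_tendsto_slope.1 hf).norm
    ((hK.comp hline).mul_const ‖y‖) ?_
  filter_upwards [hline.eventually hbound, self_mem_nhdsWithin] with s hs hst
  have hpos : 0 < ‖s - t‖ := norm_pos_iff.2 (sub_ne_zero.2 hst)
  have hdist : ‖x + s • y - (x + t • y)‖ = ‖s - t‖ * ‖y‖ := by
    rw [add_sub_add_left_eq_sub, ← sub_smul, norm_smul]
  rw [slope_def_module, norm_smul, norm_inv, inv_mul_le_iff₀ hpos]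
  calc ‖f (x + s • y) - f (x + t • y)‖
      ≤ K (x + s • y) * ‖x + s • y - (x + t • y)‖ := hs
    _ = ‖s - t‖ * (K (x + s • y) * ‖y‖) := by rw [hdist]; ring

section IteratedFDeriv

variable {E F : Type*} [NormedAddCommGroup E] [NormedSpace ℝ E]
  [NormedAddCommGroup F] [NormedSpace ℝ F] {C p : ℝ} {V : E → F}

theorem norm_le_of_hasDerivAt_iteratedFDeriv_add_smul {i : ℕ} {x y : E} {z : Fin i → E} {t : ℝ}
    {d : F} (hV : ContinuousAt V (x + t • y))
    (hbound : ∀ᶠ u in 𝓝 (x + t • y),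
      ‖iteratedFDeriv ℝ i V u - iteratedFDeriv ℝ i V (x + t • y)‖ ≤
        C * ‖u - (x + t • y)‖ * (1 + segmentSup V u (x + t • y)) ^ p)
    (hd : HasDerivAt (fun s : ℝ => iteratedFDeriv ℝ i V (x + s • y) z) d t) :
    ‖d‖ ≤ C * (∏ j, ‖z j‖) * ‖y‖ * (1 + ‖V (x + t • y)‖) ^ p := by
  set v := x + t • y
  have hlim : Tendsto (fun u => C * (∏ j, ‖z j‖) * (1 + segmentSup V u v) ^ p) (𝓝 v)
      (𝓝 (C * (∏ j, ‖z j‖) * (1 + ‖V v‖) ^ p)) :=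
    (((tendsto_segmentSup hV).const_add 1).rpow_const (.inl (by positivity))).const_mul _
  have heval : ∀ᶠ u in 𝓝 v, ‖iteratedFDeriv ℝ i V u z - iteratedFDeriv ℝ i V v z‖ ≤
      C * (∏ j, ‖z j‖) * (1 + segmentSup V u v) ^ p * ‖u - v‖ := by
    filter_upwards [hbound] with u hu
    calc ‖iteratedFDeriv ℝ i V u z - iteratedFDeriv ℝ i V v z‖
        ≤ C * ‖u - v‖ * (1 + segmentSup V u v) ^ p * ∏ j, ‖z j‖ :=
          ContinuousMultilinearMap.le_of_opNorm_le hu z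
      _ = C * (∏ j, ‖z j‖) * (1 + segmentSup V u v) ^ p * ‖u - v‖ := by ring
  calc ‖d‖ ≤ C * (∏ j, ‖z j‖) * (1 + ‖V v‖) ^ p * ‖y‖ :=
        norm_le_mul_norm_of_hasDerivAt_add_smul hd hlim heval
    _ = C * (∏ j, ‖z j‖) * ‖y‖ * (1 + ‖V v‖) ^ p := by ring

theorem stmt4_general {n : ℕ} (hsmooth : ContDiff ℝ n V)
    (hbound : ∀ u v : E, ∀ i : ℕ, i ≤ n →
      ‖iteratedFDeriv ℝ i V u - iteratedFDeriv ℝ i V v‖ ≤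
        C * ‖u - v‖ * (1 + segmentSup V u v) ^ p)
    (x y : E) :
    (∀ t : ℝ, DifferentiableAt ℝ (fun s : ℝ => V (x + s • y)) t →
      ‖deriv (fun s : ℝ => V (x + s • y)) t‖ ≤ C * ‖y‖ * (1 + ‖V (x + t • y)‖) ^ p) ∧
    (∀ i : ℕ, i ≤ n → ∀ (z : Fin i → E) (t : ℝ),
      DifferentiableAt ℝ (fun s : ℝ => iteratedFDeriv ℝ i V (x + s • y) z) t →
      ‖deriv (fun s : ℝ => iteratedFDeriv ℝ i V (x + s • y) z) t‖ ≤
        C * (∏ j, ‖z j‖) * ‖y‖ * (1 + ‖V (x + t • y)‖) ^ p) := by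
  have hderiv (i : ℕ) (hi : i ≤ n) (z : Fin i → E) (t : ℝ)
      (hd : DifferentiableAt ℝ (fun s : ℝ => iteratedFDeriv ℝ i V (x + s • y) z) t) :=
    norm_le_of_hasDerivAt_iteratedFDeriv_add_smul hsmooth.continuous.continuousAt
      (.of_forall fun u => hbound u (x + t • y) i hi) hd.hasDerivAt
  exact ⟨fun t hd => by simpa using hderiv 0 n.zero_le ![] t (by simpa using hd), hderiv⟩

end IteratedFDeriv

/-- Let `H` be a nontrivial real Hilbert space, `c ∈ [1,∞)`, `n ∈ ℕ₀`,
`x, y ∈ H`, and `V ∈ 𝒞^{n+1}_c(H,[0,∞))`.  Then (i) for every `t ∈ [0,1]` at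
which `s ↦ V(x+sy)` is differentiable,
`|(d/dt)V(x+ty)| ≤ c‖y‖(1+V(x+ty))^{1−1/c}`, and (ii) for every
`i ∈ {1,…,n}`, all `z₁,…,z_i ∈ H` and every `t ∈ [0,1]` at which
`s ↦ V⁽ⁱ⁾(x+sy)(z₁,…,z_i)` is differentiable,
`|(d/dt)(V⁽ⁱ⁾(x+ty)(z₁,…,z_i))| ≤ c‖z₁‖⋯‖z_i‖‖y‖(1+V(x+ty))^{1−1/c}`. -/
theorem stmt4 {H : Type*} [NormedAddCommGroup H] [InnerProductSpace ℝ H]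
    [Nontrivial H]
    (c : ℝ) (hc : 1 ≤ c) (n : ℕ) (x y : H) (V : H → ℝ)
    (hV0 : ∀ z : H, 0 ≤ V z)
    (hsmooth : ContDiff ℝ n V)
    (hbound : ∀ u v : H, ∀ i : ℕ, i ≤ n →
      ‖iteratedFDeriv ℝ i V u - iteratedFDeriv ℝ i V v‖ ≤
        c * ‖u - v‖ *
          (1 + ⨆ r ∈ Set.Icc (0 : ℝ) 1, |V (r • u + (1 - r) • v)|) ^ (1 - 1 / c)) :
    (∀ t ∈ Set.Icc (0 : ℝ) 1, DifferentiableAt ℝ (fun s : ℝ => V (x + s • y)) t →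
        |deriv (fun s : ℝ => V (x + s • y)) t| ≤
          c * ‖y‖ * (1 + V (x + t • y)) ^ (1 - 1 / c)) ∧
    (∀ i : ℕ, 1 ≤ i → i ≤ n → ∀ z : Fin i → H, ∀ t ∈ Set.Icc (0 : ℝ) 1,
        DifferentiableAt ℝ (fun s : ℝ => iteratedFDeriv ℝ i V (x + s • y) z) t →
        |deriv (fun s : ℝ => iteratedFDeriv ℝ i V (x + s • y) z) t| ≤
          c * (∏ j, ‖z j‖) * ‖y‖ * (1 + V (x + t • y)) ^ (1 - 1 / c)) := by
  have h := stmt4_general hsmooth hbound x y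
  simp only [Real.norm_of_nonneg (hV0 _), Real.norm_eq_abs] at h
  exact ⟨fun t _ => h.1 t, fun i _ hi z t _ => h.2 i hi z t⟩
end

section
/- Let H be a real Hilbert space with more than one element, let c ∈ [1,∞), x,y ∈ H, and V ∈ 𝒞¹_c(H,[0,∞)). Then 1 + V(x+y) ≤ 2^{c−1} (1 + V(x) + ‖y‖_H^c). -/
/-!
On the line through `x` in direction `y`, the growth condition bounds the increments of
`g t = 1 + |V (x + t • y)|` over `[s, t]` by `c * ‖y‖ * (t - s) * M ^ (1 - 1 / c)`, where `M` is any
upper bound of `g` on `[s, t]`. This is a derivative-free form of `g' ≤ c * ‖y‖ * g ^ (1 - 1 / c)`,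
that is, of `(g ^ (1 / c))' ≤ ‖y‖`. Integrating over `[0, 1]` gives
`(1 + |V (x + y)|) ^ (1 / c) ≤ (1 + |V x|) ^ (1 / c) + ‖y‖`, and raising this to the power `c` with
`(a + b) ^ c ≤ 2 ^ (c - 1) * (a ^ c + b ^ c)` proves the claim.
-/

open Filter Set Topology

theorem rpow_sub_rpow_le_mul_sub {a b p : ℝ} (ha : 0 < a) (hb : 0 ≤ b) (hp₀ : 0 ≤ p)
    (hp₁ : p ≤ 1) : b ^ p - a ^ p ≤ p * a ^ (p - 1) * (b - a) := by
  have bernoulli : (b / a) ^ p ≤ 1 + p * (b / a - 1) := by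
    have hba : -1 ≤ b / a - 1 := by linarith [div_nonneg hb ha.le]
    simpa only [add_sub_cancel] using rpow_one_add_le_one_add_mul_self hba hp₀ hp₁
  rw [Real.div_rpow hb ha.le, div_le_iff₀ (Real.rpow_pos_of_pos ha p)] at bernoulli
  calc b ^ p - a ^ p ≤ (1 + p * (b / a - 1)) * a ^ p - a ^ p := by gcongr
    _ = p * a ^ (p - 1) * (b - a) := by
      rw [Real.rpow_sub_one ha.ne']
      field_simp
      ring

theorem add_rpow_le_two_rpow_mul {a b p : ℝ} (ha : 0 ≤ a) (hb : 0 ≤ b) (hp : 1 ≤ p) :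
    (a + b) ^ p ≤ 2 ^ (p - 1) * (a ^ p + b ^ p) := by
  lift a to NNReal using ha
  lift b to NNReal using hb
  exact_mod_cast NNReal.rpow_add_le_mul_rpow_add_rpow a b hp

/-- `g` satisfies the increment form of the differential inequality `g' ≤ K * g ^ q` on `[s, t]`.
Quantifying over the upper bounds `M` of `g` on `[s, t]`, rather than using the supremum, keeps the
condition free of the junk value of the supremum of an unbounded set. -/
def IncrementBound (K q : ℝ) (g : ℝ → ℝ) (s t : ℝ) : Prop :=
  ∀ M, (∀ w ∈ Icc s t, g w ≤ M) → g t - g s ≤ K * (t - s) * M ^ q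

namespace IncrementBound

variable {K p : ℝ} {g : ℝ → ℝ}

theorem rpow_sub_rpow_le {s t M : ℝ} (h : IncrementBound K (1 - p) g s t) (hs : 0 < g s)
    (ht : 0 ≤ g t) (hM : ∀ w ∈ Icc s t, g w ≤ M) (hp₀ : 0 ≤ p) (hp₁ : p ≤ 1) :
    g t ^ p - g s ^ p ≤ p * g s ^ (p - 1) * (K * M ^ (1 - p)) * (t - s) :=
  calc g t ^ p - g s ^ p ≤ p * g s ^ (p - 1) * (g t - g s) :=
        rpow_sub_rpow_le_mul_sub hs ht hp₀ hp₁
    _ ≤ p * g s ^ (p - 1) * (K * (t - s) * M ^ (1 - p)) := by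
      gcongr
      exact h M hM
    _ = p * g s ^ (p - 1) * (K * M ^ (1 - p)) * (t - s) := by ring

theorem eventually_slope_rpow_lt {s r : ℝ} (hp₀ : 0 ≤ p) (hp₁ : p ≤ 1)
    (hg : ContinuousWithinAt g (Ici s) s) (hs : 0 < g s)
    (h : ∀ᶠ t in 𝓝[>] s, IncrementBound K (1 - p) g s t) (hr : p * K < r) :
    ∀ᶠ t in 𝓝[>] s, slope (fun w ↦ g w ^ p) s t < r := by
  have tendsto_bound :
      Tendsto (fun M ↦ p * g s ^ (p - 1) * (K * M ^ (1 - p))) (𝓝 (g s)) (𝓝 (p * K)) := by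
    have cancel : p * g s ^ (p - 1) * (K * g s ^ (1 - p)) = p * K := by
      rw [mul_mul_mul_comm, ← Real.rpow_add hs, sub_add_sub_cancel, sub_self, Real.rpow_zero,
        mul_one]
    rw [← cancel]
    exact ((tendsto_id.rpow_const (.inl hs.ne')).const_mul K).const_mul _
  obtain ⟨M, hMr, hgM⟩ : ∃ M, p * g s ^ (p - 1) * (K * M ^ (1 - p)) < r ∧ g s < M :=
    (((tendsto_bound.mono_left nhdsWithin_le_nhds).eventually_lt_const hr).and
      (self_mem_nhdsWithin (s := Ioi (g s)))).exists
  obtain ⟨u, hsu, hu⟩ : ∃ u ∈ Ioi s, Icc s u ⊆ {w | 0 < g w ∧ g w < M} :=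
    mem_nhdsGE_iff_exists_Icc_subset.1
      ((hg.eventually_const_lt hs).and (hg.eventually_lt_const hgM))
  filter_upwards [h, Ioo_mem_nhdsGT hsu] with t hst ⟨hlt, htu⟩
  have upper : ∀ w ∈ Icc s t, g w ≤ M := fun w hw ↦ (hu ⟨hw.1, hw.2.trans htu.le⟩).2.le
  rw [slope_def_field, div_lt_iff₀ (sub_pos.2 hlt)]
  calc g t ^ p - g s ^ p ≤ p * g s ^ (p - 1) * (K * M ^ (1 - p)) * (t - s) :=
        hst.rpow_sub_rpow_le hs (hu ⟨hlt.le, htu.le⟩).1.le upper hp₀ hp₁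
    _ < r * (t - s) := mul_lt_mul_of_pos_right hMr (sub_pos.2 hlt)

theorem rpow_le_rpow_add {a b : ℝ} (hp₀ : 0 ≤ p) (hp₁ : p ≤ 1) (hab : a ≤ b)
    (hg : ContinuousOn g (Icc a b)) (hpos : ∀ s ∈ Ico a b, 0 < g s)
    (h : ∀ s ∈ Ico a b, ∀ t ∈ Ioc s b, IncrementBound K (1 - p) g s t) :
    g b ^ p ≤ g a ^ p + p * K * (b - a) := by
  refine image_le_of_liminf_slope_right_le_deriv_boundary
    (f := fun t ↦ g t ^ p) (B := fun t ↦ g a ^ p + p * K * (t - a)) (B' := fun _ ↦ p * K)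
    (hg.rpow_const fun _ _ ↦ .inr hp₀) (by simp) (by fun_prop) (fun s _ ↦ ?_)
    (fun s hs r hr ↦ ?_) (right_mem_Icc.2 hab)
  · simpa only [mul_one, id] using
      ((((hasDerivAt_id s).sub_const a).const_mul (p * K)).const_add (g a ^ p)).hasDerivWithinAt
  · have right_cont : ContinuousWithinAt g (Ici s) s :=
      (hg s (Ico_subset_Icc_self hs)).mono_of_mem_nhdsWithin (Icc_mem_nhdsGE_of_mem hs)
    have increments : ∀ᶠ t in 𝓝[>] s, IncrementBound K (1 - p) g s t :=
      mem_of_superset (Ioc_mem_nhdsGT hs.2) (h s hs)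
    exact (eventually_slope_rpow_lt hp₀ hp₁ right_cont (hpos s hs) increments hr).frequently

end IncrementBound

/-- The class `𝒞¹_c(E, ℝ)` of continuous functions whose increments are controlled by the power
`1 - 1 / c` of their size along segments. Membership in `𝒞¹_c(E, B)` is this together with
`V` taking values in `B`. For `r ∉ [0, 1]` the inner supremum is over the empty set and equals `0`,
which does not change the outer one as `|V|` is nonnegative. -/
structure IsPowerGrowth {E : Type*} [SeminormedAddCommGroup E] [NormedSpace ℝ E] (c : ℝ)
    (V : E → ℝ) : Prop where
  continuous : Continuous V
  abs_sub_le : ∀ u v : E, |V u - V v| ≤ c * ‖u - v‖ *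
    (1 + ⨆ r ∈ Icc (0 : ℝ) 1, |V (r • u + (1 - r) • v)|) ^ (1 - 1 / c)

namespace IsPowerGrowth

variable {E : Type*} [SeminormedAddCommGroup E] [NormedSpace ℝ E] {c : ℝ} {V : E → ℝ}

theorem abs_sub_le_of_forall_abs_le (hV : IsPowerGrowth c V) (hc : 1 ≤ c) {u v : E} {M : ℝ}
    (hM : ∀ r ∈ Icc (0 : ℝ) 1, 1 + |V (r • u + (1 - r) • v)| ≤ M) :
    |V u - V v| ≤ c * ‖u - v‖ * M ^ (1 - 1 / c) := by
  have one_le_M : 1 ≤ M :=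
    (le_add_of_nonneg_right (abs_nonneg _)).trans (hM 0 (left_mem_Icc.2 zero_le_one))
  have sup_nonneg : 0 ≤ ⨆ r ∈ Icc (0 : ℝ) 1, |V (r • u + (1 - r) • v)| :=
    Real.iSup_nonneg fun _ ↦ Real.iSup_nonneg fun _ ↦ abs_nonneg _
  have sup_le : ⨆ r ∈ Icc (0 : ℝ) 1, |V (r • u + (1 - r) • v)| ≤ M - 1 :=
    have M_sub_one_nonneg : 0 ≤ M - 1 := sub_nonneg.2 one_le_M
    Real.iSup_le (fun r ↦ Real.iSup_le (fun hr ↦ by linarith [hM r hr]) M_sub_one_nonneg)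
      M_sub_one_nonneg
  have exponent_nonneg : 0 ≤ 1 - 1 / c := sub_nonneg.2 ((div_le_one (zero_lt_one.trans_le hc)).2 hc)
  refine (hV.abs_sub_le u v).trans ?_
  gcongr
  linarith

theorem incrementBound_line (hV : IsPowerGrowth c V) (hc : 1 ≤ c) (x y : E) {s t : ℝ}
    (hst : s ≤ t) :
    IncrementBound (c * ‖y‖) (1 - 1 / c) (fun w ↦ 1 + |V (x + w • y)|) s t := by
  intro M hM
  have segment_le : ∀ r ∈ Icc (0 : ℝ) 1,
      1 + |V (r • (x + t • y) + (1 - r) • (x + s • y))| ≤ M := by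
    intro r hr
    have on_line : r • (x + t • y) + (1 - r) • (x + s • y) = x + (r * t + (1 - r) * s) • y := by
      module
    rw [on_line]
    exact hM _ ⟨by nlinarith [hr.1], by nlinarith [hr.2]⟩
  have norm_sub_eq : ‖(x + t • y) - (x + s • y)‖ = (t - s) * ‖y‖ := by
    rw [add_sub_add_left_eq_sub, ← sub_smul, norm_smul, Real.norm_of_nonneg (sub_nonneg.2 hst)]
  calc 1 + |V (x + t • y)| - (1 + |V (x + s • y)|)
      = |V (x + t • y)| - |V (x + s • y)| := add_sub_add_left_eq_sub ..
    _ ≤ |V (x + t • y) - V (x + s • y)| := abs_sub_abs_le_abs_sub _ _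
    _ ≤ c * ‖(x + t • y) - (x + s • y)‖ * M ^ (1 - 1 / c) :=
      hV.abs_sub_le_of_forall_abs_le hc segment_le
    _ = c * ‖y‖ * (t - s) * M ^ (1 - 1 / c) := by
      rw [norm_sub_eq]
      ring

theorem one_add_abs_rpow_le_add_norm (hV : IsPowerGrowth c V) (hc : 1 ≤ c) (x y : E) :
    (1 + |V (x + y)|) ^ (1 / c) ≤ (1 + |V x|) ^ (1 / c) + ‖y‖ := by
  have hc₀ : 0 < c := zero_lt_one.trans_le hc
  have cont := hV.continuous
  have line := IncrementBound.rpow_le_rpow_add (g := fun t : ℝ ↦ 1 + |V (x + t • y)|)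
    (p := 1 / c) (by positivity) ((div_le_one hc₀).2 hc) zero_le_one (by fun_prop)
    (fun _ _ ↦ by positivity) (fun _ _ _ ht ↦ hV.incrementBound_line hc x y ht.1.le)
  have slope_eq : 1 / c * (c * ‖y‖) * (1 - 0) = ‖y‖ := by field_simp; ring
  simpa only [one_smul, zero_smul, add_zero, slope_eq] using line

end IsPowerGrowth

theorem stmt5_general {E : Type*} [SeminormedAddCommGroup E] [NormedSpace ℝ E] {c : ℝ}
    (hc : 1 ≤ c) {V : E → ℝ} (hV : IsPowerGrowth c V) (x y : E) :
    1 + |V (x + y)| ≤ 2 ^ (c - 1) * (1 + |V x| + ‖y‖ ^ c) := by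
  have hc₀ : 0 < c := zero_lt_one.trans_le hc
  calc 1 + |V (x + y)| ≤ ((1 + |V x|) ^ (1 / c) + ‖y‖) ^ c := by
        rw [← Real.rpow_inv_le_iff_of_pos (by positivity) (by positivity) hc₀, ← one_div]
        exact hV.one_add_abs_rpow_le_add_norm hc x y
    _ ≤ 2 ^ (c - 1) * (((1 + |V x|) ^ (1 / c)) ^ c + ‖y‖ ^ c) :=
      add_rpow_le_two_rpow_mul (by positivity) (norm_nonneg y) hc
    _ = 2 ^ (c - 1) * (1 + |V x| + ‖y‖ ^ c) := by
      rw [one_div, Real.rpow_inv_rpow (by positivity) hc₀.ne']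

/-- Let `H` be a nontrivial real Hilbert space, `c ∈ [1,∞)`, `x, y ∈ H`, and
`V ∈ 𝒞¹_c(H,[0,∞))`, i.e. `V : H → [0,∞)` is continuous and satisfies
`|V(u) − V(v)| ≤ c‖u−v‖(1 + sup_{r∈[0,1]}|V(ru+(1−r)v)|)^{1−1/c}` for all
`u,v ∈ H`.  Then `1 + V(x+y) ≤ 2^{c−1}(1 + V(x) + ‖y‖^c)`. -/
theorem stmt5 {H : Type*} [NormedAddCommGroup H] [InnerProductSpace ℝ H]
    [Nontrivial H]
    (c : ℝ) (hc : 1 ≤ c) (x y : H) (V : H → ℝ)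
    (hV0 : ∀ z : H, 0 ≤ V z)
    (hcont : Continuous V)
    (hbound : ∀ u v : H,
      |V u - V v| ≤
        c * ‖u - v‖ *
          (1 + ⨆ r ∈ Set.Icc (0 : ℝ) 1, |V (r • u + (1 - r) • v)|) ^ (1 - 1 / c)) :
    1 + V (x + y) ≤ (2 : ℝ) ^ (c - 1) * (1 + V x + ‖y‖ ^ c) := by
  simpa only [abs_of_nonneg (hV0 _)] using stmt5_general hc ⟨hcont, hbound⟩ x y
end

section
/- Let H be a real Hilbert space with more than one element, let c ∈ [1,∞), n ∈ ℕ₀, x ∈ H, and V ∈ 𝒞^{n+1}_c(H,[0,∞)). Then max_{i∈{0,1,…,n}} ‖V^{(i)}(x)‖_{L^{(i)}(H,ℝ)} ≤ c·(1 + V(x)). -/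
/-!
The difference quotients at `x` of the `k`-th derivative of `f` are bounded by
`c (1 + S u) ^ (1 - 1 / c)`, where `S u` is the supremum of `‖f‖` on the segment from `u` to `x`.
As `u → x`, continuity of `f` gives `S u → ‖f x‖`, so the `(k + 1)`-st derivative at `x` has norm at
most `c (1 + ‖f x‖) ^ (1 - 1 / c)`, which is at most `c (1 + ‖f x‖)`.
-/

open Filter Set
open scoped Topology

theorem norm_fderiv_le_of_lip_of_tendsto {𝕜 E F : Type*} [NontriviallyNormedField 𝕜]
    [NormedAddCommGroup E] [NormedSpace 𝕜 E] [NormedAddCommGroup F] [NormedSpace 𝕜 F]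
    {g : E → F} {x : E} {φ : E → ℝ} {C : ℝ} (hC : 0 ≤ C)
    (hlip : ∀ᶠ u in 𝓝 x, ‖g u - g x‖ ≤ φ u * ‖u - x‖) (hφ : Tendsto φ (𝓝 x) (𝓝 C)) :
    ‖fderiv 𝕜 g x‖ ≤ C := by
  refine le_of_forall_gt_imp_ge_of_dense fun C' hC' ↦ ?_
  refine norm_fderiv_le_of_lip' 𝕜 (hC.trans hC'.le) ?_
  filter_upwards [hlip, hφ.eventually_le_const hC'] with u hu hφu
  exact hu.trans (mul_le_mul_of_nonneg_right hφu (norm_nonneg _))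

section Segment

variable {E : Type*} [AddCommMonoid E] [Module ℝ E]

theorem le_iSup_segment_right {g : E → ℝ} {u x : E} {C : ℝ}
    (hC : ∀ r ∈ Icc (0 : ℝ) 1, g (r • u + (1 - r) • x) ≤ C) :
    g x ≤ ⨆ r ∈ Icc (0 : ℝ) 1, g (r • u + (1 - r) • x) := by
  have hbdd : BddAbove (⋃ r : ℝ, range fun _ : r ∈ Icc (0 : ℝ) 1 ↦ g (r • u + (1 - r) • x)) := by
    refine ⟨C, ?_⟩
    rintro _ ⟨_, ⟨r, rfl⟩, hr, rfl⟩
    exact hC r hr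
  simpa only [zero_smul, sub_zero, one_smul, zero_add] using
    le_ciSup₂ hbdd 0 (left_mem_Icc.2 zero_le_one)

variable [TopologicalSpace E] [LocallyConvexSpace ℝ E] {x : E}

theorem eventually_forall_segment {p : E → Prop} (hp : ∀ᶠ z in 𝓝 x, p z) :
    ∀ᶠ u in 𝓝 x, ∀ r ∈ Icc (0 : ℝ) 1, p (r • u + (1 - r) • x) := by
  rw [← nhdsWithin_univ] at hp ⊢
  filter_upwards [convex_univ.eventually_nhdsWithin_segment (𝕜 := ℝ) (mem_univ x) hp] with u hu r hr
  exact hu _ ⟨1 - r, r, sub_nonneg.2 hr.2, hr.1, sub_add_cancel 1 r, add_comm _ _⟩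

/- For `r ∉ Icc 0 1` the inner supremum is `sSup ∅ = 0`, so the iterated supremum agrees with the
supremum over the segment when `g` is nonnegative. -/
theorem tendsto_iSup_segment {g : E → ℝ} (hg : ContinuousAt g x) (hg0 : ∀ z, 0 ≤ g z) :
    Tendsto (fun u ↦ ⨆ r ∈ Icc (0 : ℝ) 1, g (r • u + (1 - r) • x)) (𝓝 x) (𝓝 (g x)) := by
  have hbound : ∀ C > g x, ∀ᶠ u in 𝓝 x, ∀ r ∈ Icc (0 : ℝ) 1, g (r • u + (1 - r) • x) ≤ C :=
    fun C hC ↦ eventually_forall_segment (hg.eventually_le_const hC)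
  refine tendsto_order.2 ⟨fun a ha ↦ ?_, fun b hb ↦ ?_⟩
  · filter_upwards [hbound _ (lt_add_one _)] with u hu
    exact ha.trans_le (le_iSup_segment_right hu)
  · obtain ⟨C, hC, hCb⟩ := exists_between hb
    have hC0 : 0 ≤ C := (hg0 x).trans hC.le
    filter_upwards [hbound C hC] with u hu
    exact (Real.iSup_le (fun r ↦ Real.iSup_le (hu r) hC0) hC0).trans_lt hCb

end Segment

theorem norm_fderiv_le_mul_one_add_norm_rpow {E F G : Type*} [NormedAddCommGroup E]
    [NormedSpace ℝ E] [SeminormedAddCommGroup F] [NormedAddCommGroup G] [NormedSpace ℝ G]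
    {f : E → F} {g : E → G} {x : E} {c : ℝ} (hc : 0 ≤ c) (α : ℝ) (hf : ContinuousAt f x)
    (hg : ∀ᶠ u in 𝓝 x, ‖g u - g x‖ ≤
      c * ‖u - x‖ * (1 + ⨆ r ∈ Icc (0 : ℝ) 1, ‖f (r • u + (1 - r) • x)‖) ^ α) :
    ‖fderiv ℝ g x‖ ≤ c * (1 + ‖f x‖) ^ α := by
  have hsup : Tendsto (fun u ↦ ⨆ r ∈ Icc (0 : ℝ) 1, ‖f (r • u + (1 - r) • x)‖) (𝓝 x) (𝓝 ‖f x‖) :=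
    tendsto_iSup_segment (g := fun z ↦ ‖f z‖) hf.norm fun z ↦ norm_nonneg (f z)
  have hpos : 0 < 1 + ‖f x‖ := by positivity
  refine norm_fderiv_le_of_lip_of_tendsto (by positivity) ?_
    ((hsup.const_add 1).rpow_const (.inl hpos.ne') |>.const_mul c)
  simpa only [mul_right_comm c] using hg

theorem stmt7_general {E F : Type*} [NormedAddCommGroup E] [NormedSpace ℝ E]
    [NormedAddCommGroup F] [NormedSpace ℝ F] {f : E → F} {x : E} {c : ℝ} (hc : 1 ≤ c) {n : ℕ}
    (hf : ContDiffAt ℝ n f x)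
    (hbound : ∀ i < n, ∀ᶠ u in 𝓝 x, ‖iteratedFDeriv ℝ i f u - iteratedFDeriv ℝ i f x‖ ≤
      c * ‖u - x‖ * (1 + ⨆ r ∈ Icc (0 : ℝ) 1, ‖f (r • u + (1 - r) • x)‖) ^ (1 - 1 / c)) :
    ∀ i ≤ n, ‖iteratedFDeriv ℝ i f x‖ ≤ c * (1 + ‖f x‖) := by
  have hc0 : 0 ≤ c := zero_le_one.trans hc
  have hone : 1 ≤ 1 + ‖f x‖ := le_add_of_nonneg_right (norm_nonneg _)
  rintro (_ | k) hk
  · calc ‖iteratedFDeriv ℝ 0 f x‖ = ‖f x‖ := norm_iteratedFDeriv_zero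
      _ ≤ 1 + ‖f x‖ := le_add_of_nonneg_left zero_le_one
      _ ≤ c * (1 + ‖f x‖) := le_mul_of_one_le_left (by positivity) hc
  · calc ‖iteratedFDeriv ℝ (k + 1) f x‖ = ‖fderiv ℝ (iteratedFDeriv ℝ k f) x‖ :=
          norm_fderiv_iteratedFDeriv.symm
      _ ≤ c * (1 + ‖f x‖) ^ (1 - 1 / c) :=
          norm_fderiv_le_mul_one_add_norm_rpow hc0 _ hf.continuousAt (hbound k hk)
      _ ≤ c * (1 + ‖f x‖) := by
          gcongr
          exact Real.rpow_le_self_of_one_le hone (sub_le_self 1 (by positivity))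

/-- Let `H` be a nontrivial real Hilbert space, `c ∈ [1,∞)`, `n ∈ ℕ₀`, `x ∈ H`,
and `V ∈ 𝒞^{n+1}_c(H,[0,∞))`.  Then for every `i ∈ {0,…,n}` it holds that
`‖V⁽ⁱ⁾(x)‖_{L⁽ⁱ⁾(H,ℝ)} ≤ c(1 + V(x))`. -/
theorem stmt7 {H : Type*} [NormedAddCommGroup H] [InnerProductSpace ℝ H]
    [Nontrivial H]
    (c : ℝ) (hc : 1 ≤ c) (n : ℕ) (x : H) (V : H → ℝ)
    (hV0 : ∀ z : H, 0 ≤ V z)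
    (hsmooth : ContDiff ℝ n V)
    (hbound : ∀ u v : H, ∀ i : ℕ, i ≤ n →
      ‖iteratedFDeriv ℝ i V u - iteratedFDeriv ℝ i V v‖ ≤
        c * ‖u - v‖ *
          (1 + ⨆ r ∈ Set.Icc (0 : ℝ) 1, |V (r • u + (1 - r) • v)|) ^ (1 - 1 / c)) :
    ∀ i : ℕ, i ≤ n → ‖iteratedFDeriv ℝ i V x‖ ≤ c * (1 + V x) := by
  simpa only [Real.norm_of_nonneg (hV0 x)] using
    stmt7_general hc hsmooth.contDiffAt fun i hi ↦ .of_forall fun u ↦ hbound u x i hi.le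
end
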